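/- arXiv:2410.11170 — 2 statements merged into one kernel-verified Lean document; each statement's English description precedes it below -/
import Mathlib

section
/- Let m ≥ 2 be an integer, let P₁, …, P_m be distinct points on the unit sphere S², and let l₁, …, l_m be integers, each different from 0, 1, and −1, satisfying Σ_{j=1}^m l_j = m − 2. Then there exists a (−1)-homogeneous solution u ∈ C^∞(S² \ {P₁, …, P_m}) of the stationary Navier–Stokes equations such that for each 1 ≤ j ≤ m, the quantity u(x) − 2(|l_j| − 1) · (x − P_j − ⟨x, x − P_j⟩ x)/|x − P_j|² stays bounded as x → P_j on S². (Here (x − P_j − ⟨x, x−P_j⟩x)/|x−P_j|² is the tangential gradient ∇_{S²} ln|x − P_j| at x ∈ S².) -/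
noncomputable section

open Real Filter MeasureTheory Metric Topology
open scoped ENNReal InnerProductSpace

abbrev V3 := EuclideanSpace ℝ (Fin 3)
abbrev V2 := EuclideanSpace ℝ (Fin 2)

/-- standard basis vector in `ℝ³` -/
def e3 (j : Fin 3) : V3 := EuclideanSpace.single j 1

/-- partial derivative `∂_j f` -/
def pd (j : Fin 3) (f : V3 → ℝ) (x : V3) : ℝ := fderiv ℝ f x (e3 j)

/-- Laplacian on `ℝ³` -/
def lap3 (f : V3 → ℝ) (x : V3) : ℝ := ∑ j, pd j (fun y => pd j f y) x

/-- stationary Navier–Stokes equations `-Δu + (u·∇)u + ∇p = 0`, `div u = 0` at `x` -/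
def NSEq (u : V3 → V3) (p : V3 → ℝ) (x : V3) : Prop :=
  (∀ i, - lap3 (fun z => u z i) x + (∑ j, u x j * pd j (fun z => u z i) x) + pd i p x = 0)
  ∧ (∑ j, pd j (fun z => u z j) x) = 0

/-- stationary Euler equations `(u·∇)u + ∇p = 0`, `div u = 0` at `x` -/
def EulerEq (u : V3 → V3) (p : V3 → ℝ) (x : V3) : Prop :=
  (∀ i, (∑ j, u x j * pd j (fun z => u z i) x) + pd i p x = 0)
  ∧ (∑ j, pd j (fun z => u z j) x) = 0

/-- south pole -/
def S3 : V3 := EuclideanSpace.single 2 (-1)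
/-- north pole -/
def N3 : V3 := EuclideanSpace.single 2 1

/-- the unit sphere `S²` -/
def sphere2 : Set V3 := Metric.sphere (0 : V3) 1

/-- the open cone over a subset of the unit sphere -/
def cone3 (Ω : Set V3) : Set V3 := {x : V3 | x ≠ 0 ∧ (‖x‖⁻¹ • x) ∈ Ω}

/-- `|x'| = √(x₁² + x₂²)` -/
def rho (x : V3) : ℝ := Real.sqrt ((x 0) ^ 2 + (x 1) ^ 2)

/-- the `x₃`-axis `{x' = 0}` -/
def axis3 : Set V3 := {x : V3 | x 0 = 0 ∧ x 1 = 0}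

/-- `Ω_{a,b,R} = {a < x₃ < b, |x'| < R}` -/
def OmegaR (a b R : ℝ) : Set V3 := {x : V3 | a < x 2 ∧ x 2 < b ∧ rho x < R}

/-- build a point of `ℝ³` from `x' ∈ ℝ²` and `x₃ ∈ ℝ` -/
def emb (y : V2) (t : ℝ) : V3 := (EuclideanSpace.equiv (Fin 3) ℝ).symm ![y 0, y 1, t]

/-- spherical component `u_r = u · e_r` -/
def uRc (u : V3 → V3) (x : V3) : ℝ := (u x 0 * x 0 + u x 1 * x 1 + u x 2 * x 2) / ‖x‖

/-- spherical component `u_θ = u · e_θ` -/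
def uTc (u : V3 → V3) (x : V3) : ℝ :=
  (u x 0 * x 0 * x 2 + u x 1 * x 1 * x 2) / (‖x‖ * rho x) - u x 2 * rho x / ‖x‖

/-- spherical component `u_φ = u · e_φ` -/
def uPc (u : V3 → V3) (x : V3) : ℝ := (-(u x 0) * x 1 + u x 1 * x 0) / rho x

/-- axisymmetry on a set: the spherical components are independent of the meridian angle -/
def AxisymOn (u : V3 → V3) (Ω : Set V3) : Prop :=
  ∀ x ∈ Ω, ∀ y ∈ Ω, ‖x‖ = ‖y‖ → x 2 = y 2 →
    uRc u x = uRc u y ∧ uTc u x = uTc u y ∧ uPc u x = uPc u y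

/-- spherical frame vector `e_r` -/
def eRv (x : V3) : V3 := ‖x‖⁻¹ • x

/-- spherical frame vector `e_θ` -/
def eThv (x : V3) : V3 := (EuclideanSpace.equiv (Fin 3) ℝ).symm
  ![x 2 * x 0 / (‖x‖ * rho x), x 2 * x 1 / (‖x‖ * rho x), -(rho x) / ‖x‖]

/-- spherical frame vector `e_φ` -/
def ePhv (x : V3) : V3 := (EuclideanSpace.equiv (Fin 3) ℝ).symm ![-(x 1) / rho x, x 0 / rho x, 0]

/-- the spherical cap `S² ∩ B_δ(S) \ {S}` -/
def NSCap (δ : ℝ) : Set V3 := (sphere2 ∩ Metric.ball S3 δ) \ {S3}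

/-- the spherical cap `S² ∩ B_δ(S)` -/
def NSCapFull (δ : ℝ) : Set V3 := sphere2 ∩ Metric.ball S3 δ


lemma two_le_smooth : (2 : WithTop ℕ∞) ≤ ((⊤ : ℕ∞) : WithTop ℕ∞) :=
  WithTop.coe_le_coe.2 (le_top : (2 : ℕ∞) ≤ ⊤)

lemma two_le_smooth' : (1 + 1 : WithTop ℕ∞) ≤ ((⊤ : ℕ∞) : WithTop ℕ∞) := by
  rw [one_add_one_eq_two]
  exact two_le_smooth

/-- denominator -/
def dN (P x : V3) : ℝ := ‖x‖ - ⟪P, x⟫_ℝ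

/-- component of the gradient of `ln (|x| - ⟨P, x⟩)` -/
def qc (P : V3) (i : Fin 3) (x : V3) : ℝ := (x i * ‖x‖⁻¹ - P i) * (dN P x)⁻¹

lemma hasFD_norm (x : V3) (hx : x ≠ 0) :
    HasFDerivAt (fun y : V3 => ‖y‖) (‖x‖⁻¹ • innerSL ℝ x) x := by
  have h := (hasStrictFDerivAt_norm_sq x).hasFDerivAt.sqrt (by simpa using hx)
  have hn : ‖x‖ ≠ 0 := by simpa using hx
  have e : ‖x‖⁻¹ • innerSL ℝ x = (1 / (2 * √(‖x‖ ^ 2))) • 2 • innerSL ℝ x := by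
    ext y
    simp
    field_simp
  rw [e]
  simpa only [Real.sqrt_sq (norm_nonneg _)] using h

lemma pd_qc (P x : V3) (hx : x ≠ 0) (hN : dN P x ≠ 0) (i j : Fin 3) :
    pd j (qc P i) x = ((if i = j then 1 else 0) * ‖x‖⁻¹ - x i * x j * (‖x‖⁻¹) ^ 3) * (dN P x)⁻¹
      - (x i * ‖x‖⁻¹ - P i) * (x j * ‖x‖⁻¹ - P j) * ((dN P x)⁻¹) ^ 2 := by
  have hn : ‖x‖ ≠ 0 := by simpa using hx
  have h1 := hasFD_norm x hx
  have h2 : HasFDerivAt (fun y : V3 => ‖y‖⁻¹) _ x := (hasDerivAt_inv hn).comp_hasFDerivAt x h1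
  have h3 : HasFDerivAt (fun y : V3 => y i) (EuclideanSpace.proj i : V3 →L[ℝ] ℝ) x :=
    (EuclideanSpace.proj i : V3 →L[ℝ] ℝ).hasFDerivAt
  have h4 : HasFDerivAt (dN P) (‖x‖⁻¹ • innerSL ℝ x - innerSL ℝ P) x :=
    h1.sub (innerSL ℝ P).hasFDerivAt
  have h5 : HasFDerivAt (fun y : V3 => (dN P y)⁻¹) _ x := (hasDerivAt_inv hN).comp_hasFDerivAt x h4
  have h6 : HasFDerivAt (qc P i) _ x := ((h3.mul h2).sub_const (P i)).mul h5
  rw [pd, h6.fderiv]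
  have e1 : ∀ v : V3, ⟪v, e3 j⟫_ℝ = v j := by
    intro v; simp [e3, EuclideanSpace.inner_single_right]
  have e2 : (e3 j) i = if i = j then 1 else 0 := by simp [e3]
  simp [e1, e2]
  split_ifs <;> field_simp <;> ring

lemma sum_sq_norm (x : V3) : x 0 ^ 2 + x 1 ^ 2 + x 2 ^ 2 = ‖x‖ ^ 2 := by
  rw [EuclideanSpace.real_norm_sq_eq, Fin.sum_univ_three]

lemma div_qc (P x : V3) (hP : ‖P‖ = 1) (hx : x ≠ 0) (hN : dN P x ≠ 0) :
    ∑ j, pd j (qc P j) x = 0 := by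
  have hn : ‖x‖ ≠ 0 := by simpa using hx
  simp only [Fin.sum_univ_three, pd_qc P x hx hN]
  have a := sum_sq_norm x
  have b := sum_sq_norm P
  have c : dN P x = ‖x‖ - (P 0 * x 0 + P 1 * x 1 + P 2 * x 2) := by
    rw [dN, PiLp.inner_apply]; simp [Fin.sum_univ_three]; ring
  rw [hP] at b
  simp only [if_true]
  generalize dN P x = d at *
  generalize ‖x‖ = r at *
  field_simp
  linear_combination (-d - r) * a - r^2 * r * b + 2 * r^2 * c

lemma symm_qc (P x : V3) (hx : x ≠ 0) (hN : dN P x ≠ 0) (i j : Fin 3) :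
    pd j (qc P i) x = pd i (qc P j) x := by
  rw [pd_qc P x hx hN, pd_qc P x hx hN]
  simp only [eq_comm (a := i) (b := j)]
  ring

lemma smooth_dN (P x : V3) (hx : x ≠ 0) : ContDiffAt ℝ (⊤ : ℕ∞) (dN P) x :=
  (contDiffAt_norm ℝ hx).sub (innerSL ℝ P).contDiff.contDiffAt

lemma smooth_qc (P x : V3) (hx : x ≠ 0) (hN : dN P x ≠ 0) (i : Fin 3) :
    ContDiffAt ℝ (⊤ : ℕ∞) (qc P i) x := by
  have hn : ‖x‖ ≠ 0 := by simpa using hx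
  have h3 : ContDiffAt ℝ (⊤ : ℕ∞) (fun y : V3 => y i) x :=
    (EuclideanSpace.proj i : V3 →L[ℝ] ℝ).contDiff.contDiffAt
  exact ((h3.mul ((contDiffAt_norm ℝ hx).inv hn)).sub contDiffAt_const).mul
    ((smooth_dN P x hx).inv hN)

/-- regular set -/
def Wset {m : ℕ} (P : Fin m → V3) : Set V3 := {x | x ≠ 0 ∧ ∀ j, dN (P j) x ≠ 0}

lemma cont_dN (P : V3) : Continuous (dN P) :=
  continuous_norm.sub (innerSL ℝ P).continuous

lemma isOpen_W {m : ℕ} (P : Fin m → V3) : IsOpen (Wset P) := by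
  have : Wset P = {x | x ≠ 0} ∩ ⋂ j, {x | dN (P j) x ≠ 0} := by
    ext x; simp [Wset]
  rw [this]
  exact isOpen_ne.inter (isOpen_iInter_of_finite fun j => isOpen_ne_fun (cont_dN _) continuous_const)

lemma dN_sphere (P x : V3) (hP : ‖P‖ = 1) (hx : ‖x‖ = 1) : dN P x = ‖x - P‖ ^ 2 / 2 := by
  rw [norm_sub_sq_real, hP, hx, dN, hx, real_inner_comm]; ring

lemma dN_smul (P x : V3) (c : ℝ) (hc : 0 < c) : dN P (c • x) = c * dN P x := by
  simp [dN, norm_smul, abs_of_pos hc, inner_smul_right]; ring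

lemma cone_sub {m : ℕ} (P : Fin m → V3) (hP : ∀ j, P j ∈ sphere2) :
    cone3 (sphere2 \ Set.range P) ⊆ Wset P := by
  rintro x ⟨hx, h1, h2⟩
  refine ⟨hx, fun j hj => h2 ⟨j, ?_⟩⟩
  have hn : 0 < ‖x‖⁻¹ := by simpa using hx
  have h := dN_smul (P j) x _ hn
  have hP' : ‖P j‖ = 1 := by simpa [sphere2] using hP j
  have h1' : ‖‖x‖⁻¹ • x‖ = 1 := by simpa only [sphere2, mem_sphere_zero_iff_norm] using h1
  rw [hj, dN_sphere _ _ hP' h1'] at h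
  have : ‖‖x‖⁻¹ • x - P j‖ = 0 := by
    have : ‖‖x‖⁻¹ • x - P j‖ ^ 2 = 0 := by linarith
    simpa using this
  exact (sub_eq_zero.1 (norm_eq_zero.1 this)).symm

/-- component of the velocity -/
def uc {m : ℕ} (P : Fin m → V3) (b : Fin m → ℝ) (i : Fin 3) (x : V3) : ℝ := ∑ k, b k * qc (P k) i x

section
variable {m : ℕ} (P : Fin m → V3) (b : Fin m → ℝ)

lemma smooth_uc (x : V3) (hx : x ∈ Wset P) (i : Fin 3) :
    ContDiffAt ℝ (⊤ : ℕ∞) (uc P b i) x :=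
  ContDiffAt.sum fun k _ => contDiffAt_const.mul (smooth_qc (P k) x hx.1 (hx.2 k) i)

lemma pd_uc (x : V3) (hx : x ∈ Wset P) (i j : Fin 3) :
    pd j (uc P b i) x = ∑ k, b k * pd j (qc (P k) i) x := by
  have h : HasFDerivAt (uc P b i) (∑ k, b k • fderiv ℝ (qc (P k) i) x) x :=
    HasFDerivAt.fun_sum fun k _ =>
      ((smooth_qc (P k) x hx.1 (hx.2 k) i).differentiableAt (by simp)).hasFDerivAt.const_mul (b k)
  rw [pd, h.fderiv]
  simp [pd]

lemma symm_uc (x : V3) (hx : x ∈ Wset P) (i j : Fin 3) :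
    pd j (uc P b i) x = pd i (uc P b j) x := by
  rw [pd_uc P b x hx, pd_uc P b x hx]
  exact Finset.sum_congr rfl fun k _ => by rw [symm_qc _ x hx.1 (hx.2 k)]

lemma div_uc (hP : ∀ j, ‖P j‖ = 1) (x : V3) (hx : x ∈ Wset P) :
    ∑ j, pd j (uc P b j) x = 0 := by
  simp_rw [pd_uc P b x hx]
  rw [Finset.sum_comm]
  simp_rw [← Finset.mul_sum, div_qc _ x (hP _) hx.1 (hx.2 _)]
  simp

lemma pd_comm (f : V3 → ℝ) (x : V3) (hf : ContDiffAt ℝ (⊤ : ℕ∞) f x) (i j : Fin 3) :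
    pd j (fun y => pd i f y) x = pd i (fun y => pd j f y) x := by
  have hd : DifferentiableAt ℝ (fderiv ℝ f) x :=
    (hf.fderiv_right (m := 1) two_le_smooth').differentiableAt (by simp)
  have key : ∀ i j, pd j (fun y => pd i f y) x = fderiv ℝ (fderiv ℝ f) x (e3 j) (e3 i) := by
    intro i j
    have := (hd.hasFDerivAt.clm_apply (hasFDerivAt_const (e3 i) x)).fderiv
    simp only [pd]
    rw [this]; simp
  rw [key, key]
  exact (hf.isSymmSndFDerivAt (by simpa using two_le_smooth)).eq _ _

lemma pd_congr {f g : V3 → ℝ} {x : V3} (h : f =ᶠ[𝓝 x] g) (j : Fin 3) : pd j f x = pd j g x := by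
  rw [pd, pd, h.fderiv_eq]

lemma diff_pd (f : V3 → ℝ) (x : V3) (hf : ContDiffAt ℝ (⊤ : ℕ∞) f x) (i : Fin 3) :
    DifferentiableAt ℝ (fun y => pd i f y) x := by
  have hd : DifferentiableAt ℝ (fderiv ℝ f) x :=
    (hf.fderiv_right (m := 1) two_le_smooth').differentiableAt (by simp)
  exact hd.clm_apply (differentiableAt_const _)

lemma lap_uc (hP : ∀ j, ‖P j‖ = 1) (x : V3) (hx : x ∈ Wset P) (i : Fin 3) :
    lap3 (uc P b i) x = 0 := by
  have hW := (isOpen_W P).mem_nhds hx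
  have h1 : ∀ j, pd j (fun y => pd j (uc P b i) y) x = pd i (fun y => pd j (uc P b j) y) x := by
    intro j
    rw [← pd_comm _ x (smooth_uc P b x hx j)]
    apply pd_congr
    filter_upwards [hW] with y hy
    exact symm_uc P b y hy i j
  rw [lap3]
  simp_rw [h1]
  have h2 : pd i (fun y => ∑ j, pd j (uc P b j) y) x = ∑ j, pd i (fun y => pd j (uc P b j) y) x := by
    have := (HasFDerivAt.fun_sum (u := Finset.univ) fun j _ =>
      (diff_pd _ x (smooth_uc P b x hx j) j).hasFDerivAt).fderiv
    rw [pd, this]; simp [pd]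
  rw [← h2, pd_congr (g := fun _ => 0)]
  · simp [pd]
  · filter_upwards [hW] with y hy
    exact div_uc P b hP y hy

/-- pressure -/
def pc (x : V3) : ℝ := -(1 / 2) * ∑ j, uc P b j x ^ 2

lemma pd_pc (x : V3) (hx : x ∈ Wset P) (i : Fin 3) :
    pd i (pc P b) x = - ∑ j, uc P b j x * pd i (uc P b j) x := by
  have h : HasFDerivAt (pc P b) _ x := (HasFDerivAt.fun_sum (u := Finset.univ) fun j _ =>
      ((smooth_uc P b x hx j).differentiableAt (by simp)).hasFDerivAt.pow 2).const_mul (-(1/2))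
  rw [pd, h.fderiv]
  simp [pd, Fin.sum_univ_three]
  ring

/-- velocity -/
def uv (x : V3) : V3 := WithLp.toLp 2 fun i => uc P b i x

lemma ns_uv (hP : ∀ j, ‖P j‖ = 1) (x : V3) (hx : x ∈ Wset P) : NSEq (uv P b) (pc P b) x := by
  refine ⟨fun i => ?_, div_uc P b hP x hx⟩
  change - lap3 (uc P b i) x + (∑ j, uc P b j x * pd j (uc P b i) x) + pd i (pc P b) x = 0
  rw [lap_uc P b hP x hx, pd_pc P b x hx]
  simp_rw [symm_uc P b x hx i]
  simp

lemma smooth_uv (x : V3) (hx : x ∈ Wset P) : ContDiffAt ℝ (⊤ : ℕ∞) (uv P b) x := by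
  rw [contDiffAt_euclidean]
  exact fun i => smooth_uc P b x hx i

lemma uc_smul (x : V3) (c : ℝ) (hc : 0 < c) (i : Fin 3) : uc P b i (c • x) = c⁻¹ * uc P b i x := by
  simp only [uc, Finset.mul_sum]
  refine Finset.sum_congr rfl fun k _ => ?_
  simp only [qc, dN_smul _ _ _ hc, norm_smul, Real.norm_eq_abs, abs_of_pos hc, PiLp.smul_apply,
    smul_eq_mul, mul_inv]
  have : c * x i * (c⁻¹ * ‖x‖⁻¹) = x i * ‖x‖⁻¹ := by field_simp
  rw [this]; ring

lemma uv_eq (x : V3) : uv P b x = ∑ k, (b k * (dN (P k) x)⁻¹) • (‖x‖⁻¹ • x - P k) := by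
  ext i
  simp only [uv, uc, qc, WithLp.ofLp_sum, Finset.sum_apply, PiLp.smul_apply, PiLp.sub_apply, smul_eq_mul]
  refine Finset.sum_congr rfl fun k _ => by ring

lemma bdd_uv (hP : ∀ j, ‖P j‖ = 1) (hPinj : Function.Injective P) (j : Fin m) :
    ∃ C : ℝ, ∀ᶠ x in 𝓝[sphere2 \ Set.range P] (P j),
        ‖uv P b x - (2 * b j / ‖x - P j‖ ^ 2) •
          (x - P j - (⟪x, x - P j⟫_ℝ) • x)‖ ≤ C := by
  classical
  let g : V3 → V3 := fun x => b j • x +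
    ∑ k ∈ Finset.univ.erase j, (b k * (dN (P k) x)⁻¹) • (‖x‖⁻¹ • x - P k)
  have hPj : P j ≠ 0 := fun h => by have := hP j; rw [h] at this; simp at this
  have hg : ContinuousAt g (P j) := by
    refine (continuousAt_id.const_smul (b j)).add (tendsto_finsetSum _ fun k hk => ?_)
    have hne : dN (P k) (P j) ≠ 0 := by
      rw [dN_sphere _ _ (hP k) (hP j)]
      have : P j - P k ≠ 0 := sub_ne_zero.2 fun h => (Finset.ne_of_mem_erase hk) (hPinj h).symm
      have := norm_pos_iff.2 this
      positivity
    have h1 : ContinuousAt (fun x : V3 => (b k * (dN (P k) x)⁻¹) • (‖x‖⁻¹ • x - P k)) (P j) :=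
      (continuousAt_const.mul ((cont_dN _).continuousAt.inv₀ hne)).smul
      (((continuousAt_id.norm.inv₀ (by simpa using hPj)).smul continuousAt_id).sub continuousAt_const)
    exact h1
  refine ⟨‖g (P j)‖ + 1, ?_⟩
  have h2 : ∀ᶠ x in 𝓝 (P j), ‖g x‖ < ‖g (P j)‖ + 1 :=
    hg.norm.eventually (gt_mem_nhds (by simp))
  filter_upwards [mem_nhdsWithin_of_mem_nhds h2, self_mem_nhdsWithin] with x hx hxs
  refine le_of_eq_of_le ?_ hx.le
  congr 1
  have hx1 : ‖x‖ = 1 := by simpa [sphere2] using hxs.1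
  have hne : ‖x - P j‖ ≠ 0 := norm_ne_zero_iff.2 (sub_ne_zero.2 fun h => hxs.2 ⟨j, h.symm⟩)
  have hi : ⟪x, x - P j⟫_ℝ = ‖x - P j‖ ^ 2 / 2 := by
    rw [← dN_sphere _ _ (hP j) hx1, dN, inner_sub_right, real_inner_self_eq_norm_sq, hx1,
      real_inner_comm]; ring
  rw [uv_eq, ← Finset.add_sum_erase _ _ (Finset.mem_univ j), hi, dN_sphere _ _ (hP j) hx1]
  simp only [g]
  rw [add_sub_right_comm]
  congr 1
  rw [hx1, inv_one, one_smul]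
  rw [smul_sub (2 * b j / ‖x - P j‖ ^ 2), smul_smul]
  have e1 : b j * (‖x - P j‖ ^ 2 / 2)⁻¹ = 2 * b j / ‖x - P j‖ ^ 2 := by field_simp
  have e2 : 2 * b j / ‖x - P j‖ ^ 2 * (‖x - P j‖ ^ 2 / 2) = b j := by field_simp
  rw [e1, e2]; abel

end

/-- existence of `(-1)`-homogeneous solutions with any finite number of
prescribed singular points on `S²` (Theorem 3.1). -/
theorem existence_finitely_many_singularities (m : ℕ) (hm : 2 ≤ m)
    (P : Fin m → V3) (hP : ∀ j, P j ∈ sphere2) (hPinj : Function.Injective P)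
    (l : Fin m → ℤ) (hl : ∀ j, l j ≠ 0 ∧ l j ≠ 1 ∧ l j ≠ -1)
    (hsum : ∑ j, l j = (m : ℤ) - 2) :
    ∃ (u : V3 → V3) (p : V3 → ℝ),
      ContDiffOn ℝ (⊤:ℕ∞) u (cone3 (sphere2 \ Set.range P)) ∧
      (∀ x ∈ cone3 (sphere2 \ Set.range P), ∀ lam : ℝ, 0 < lam →
        u (lam • x) = lam⁻¹ • u x) ∧
      (∀ x ∈ cone3 (sphere2 \ Set.range P), ∀ lam : ℝ, 0 < lam →
        p (lam • x) = (lam ^ 2)⁻¹ * p x) ∧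
      (∀ x ∈ cone3 (sphere2 \ Set.range P), NSEq u p x) ∧
      (∀ j, ∃ C : ℝ, ∀ᶠ x in 𝓝[sphere2 \ Set.range P] (P j),
        ‖u x - (2 * (|(l j : ℝ)| - 1) / ‖x - P j‖ ^ 2) •
          (x - P j - (⟪x, x - P j⟫_ℝ) • x)‖ ≤ C) := by
  have hP' : ∀ j, ‖P j‖ = 1 := fun j => by simpa [sphere2] using hP j
  refine ⟨uv P (fun j => |(l j : ℝ)| - 1), pc P (fun j => |(l j : ℝ)| - 1), ?_, ?_, ?_, ?_, ?_⟩
  · exact fun x hx => (smooth_uv P _ x (cone_sub P hP hx)).contDiffWithinAt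
  · intro x _ c hc
    ext i
    exact uc_smul P _ x c hc i
  · intro x _ c hc
    simp only [pc, uc_smul P _ x c hc, mul_pow, ← Finset.mul_sum]
    rw [inv_pow]; ring
  · exact fun x hx => ns_uv P _ hP' x (cone_sub P hP hx)
  · exact fun j => bdd_uv P _ hP' hPinj j
end
end

section
/- For every α > 0, there exists a (−1)-homogeneous axisymmetric no-swirl solution (u,p) ∈ C^∞(S² \ {S, N}) of the stationary Navier–Stokes equations such that lim_{x∈S², x→S} |u(x)|/ln(dist(x,S)) = lim_{x∈S², x→N} |u(x)|/ln(dist(x,N)) = −α. -/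
noncomputable section

open Real Filter MeasureTheory Metric Topology
open scoped ENNReal InnerProductSpace

theorem ps_summable (c : ℕ → ℝ) (C : ℝ) (m : ℕ) (h : ∀ n, |c n| ≤ C * ((n:ℝ)+1)^m) (y : ℝ)
    (hy : |y| < 1) : Summable (fun n => |c n| * |y|^n) := by
  have h1 : Summable (fun n : ℕ => ((n:ℝ)+1)^m * |y|^n) := by
    have h0 : Summable (fun n : ℕ => ((n:ℝ))^m * (|y|)^n) :=
      summable_pow_mul_geometric_of_norm_lt_one m (by simpa using hy)
    by_cases hz : y = 0
    · refine summable_of_ne_finset_zero (s := {0}) ?_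
      intro b hb
      simp at hb
      simp [hz, hb]
    · have h2 := (summable_nat_add_iff 1).2 h0
      have h3 := h2.mul_right (|y|⁻¹)
      refine h3.congr ?_
      intro n
      have : |y| ≠ 0 := by simpa using hz
      push_cast
      field_simp
      ring
  refine Summable.of_nonneg_of_le (fun n => by positivity) (fun n => ?_) (h1.mul_left C)
  have := mul_le_mul_of_nonneg_right (h n) (by positivity : 0 ≤ |y|^n)
  linarith

theorem ps_summable' (c : ℕ → ℝ) (C : ℝ) (m : ℕ) (h : ∀ n, |c n| ≤ C * ((n:ℝ)+1)^m) (y : ℝ)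
    (hy : |y| < 1) : Summable (fun n => c n * y^n) := by
  refine Summable.of_norm ?_
  simpa [abs_mul] using ps_summable c C m h y hy

theorem ps_bound (c : ℕ → ℝ) (C : ℝ) (m : ℕ) (h : ∀ n, |c n| ≤ C * ((n:ℝ)+1)^m) :
    ∀ n : ℕ, |((n:ℝ)+1) * c (n+1)| ≤ (C * 2^m) * ((n:ℝ)+1)^(m+1) := by
  intro n
  have hC : 0 ≤ C := by
    have := (abs_nonneg _).trans (h 0)
    simpa using this
  rw [abs_mul, abs_of_nonneg (by positivity : (0:ℝ) ≤ (n:ℝ)+1)]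
  have h1 := h (n+1)
  push_cast at h1
  have h2 : ((n:ℝ)+1+1)^m ≤ (2*((n:ℝ)+1))^m := by
    gcongr
    have : (0:ℝ) ≤ n := by positivity
    linarith
  rw [mul_pow] at h2
  calc ((n:ℝ)+1) * |c (n+1)| ≤ ((n:ℝ)+1) * (C * (2^m * ((n:ℝ)+1)^m)) := by
        gcongr
        exact h1.trans (by gcongr)
    _ = _ := by ring

theorem ps_deriv (c : ℕ → ℝ) (C : ℝ) (m : ℕ) (h : ∀ n, |c n| ≤ C * ((n:ℝ)+1)^m) (y : ℝ)
    (hy : |y| < 1) :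
    HasDerivAt (fun y : ℝ => ∑' n, c n * y^n) (∑' n : ℕ, (((n:ℝ)+1) * c (n+1)) * y^n) y := by
  obtain ⟨r, hr1, hr2⟩ := exists_between hy
  have hr0 : 0 < r := (abs_nonneg y).trans_lt hr1
  have hs := ps_summable _ _ _ (ps_bound c C m h) r (by rwa [abs_of_pos hr0])
  have hs' : Summable (fun n : ℕ => |(n:ℝ) * c n| * r^(n-1)) := by
    refine (summable_nat_add_iff 1).1 ?_
    refine hs.congr ?_
    intro n
    simp [abs_of_pos hr0]
  have key := hasDerivAt_tsum_of_isPreconnected (u := fun n : ℕ => |(n:ℝ) * c n| * r^(n-1))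
    (g := fun n y => c n * y^n) (g' := fun n y => c n * (n * y^(n-1))) (t := Metric.ball (0:ℝ) r)
    (y₀ := 0) (y := y) hs' Metric.isOpen_ball (convex_ball _ _).isPreconnected
    (fun n y _ => (hasDerivAt_pow n y).const_mul (c n))
    (fun n z hz => by
      rw [Real.norm_eq_abs, abs_mul, abs_mul, abs_pow, abs_mul]
      have : |z| < r := by simpa using hz
      have h3 : |z|^(n-1) ≤ r^(n-1) := by gcongr
      calc |c n| * (|(n:ℝ)| * |z|^(n-1)) = |(n:ℝ)| * |c n| * |z|^(n-1) := by ring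
        _ ≤ _ := by gcongr)
    (by simpa using hr0)
    (ps_summable' c C m h 0 (by simp))
    (by simpa using hr1)
  refine key.congr_deriv ?_
  rw [Summable.tsum_eq_zero_add (f := fun n : ℕ => c n * (n * y^(n-1)))]
  · simp
    congr 1
    ext n
    ring
  · refine (summable_nat_add_iff 1).1 ?_
    refine (ps_summable' _ _ _ (ps_bound c C m h) y hy).congr ?_
    intro n
    simp
    ring

def aco (k : ℝ) : ℕ → ℝ
  | 0 => 1
  | 1 => 0
  | (n+2) => ((n:ℝ)*((n:ℝ)-1)+k) / (((n:ℝ)+2)*((n:ℝ)+1)) * aco k n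

theorem aco_fac (k : ℝ) (hk : 0 < k) (n : ℕ) : 0 ≤ (n:ℝ)*((n:ℝ)-1)+k := by
  rcases n with _ | n
  · simp [hk.le]
  · push_cast
    have : 0 ≤ ((n:ℝ)+1)*n := by positivity
    nlinarith

theorem aco_nonneg (k : ℝ) (hk : 0 < k) : ∀ n, 0 ≤ aco k n
  | 0 => by simp [aco]
  | 1 => by simp [aco]
  | (n+2) => by
    rw [aco]
    exact mul_nonneg (div_nonneg (aco_fac k hk n) (by positivity)) (aco_nonneg k hk n)

theorem aco_odd (k : ℝ) : ∀ n, aco k (2*n+1) = 0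
  | 0 => by simp [aco]
  | (n+1) => by
    have : 2*(n+1)+1 = (2*n+1)+2 := by ring
    rw [this, aco, aco_odd k n, mul_zero]

theorem aco_bdd (k : ℝ) (hk : 0 < k) : ∃ C, ∀ n, |aco k n| ≤ C * ((n:ℝ)+1)^0 := by
  obtain ⟨N, hN⟩ := exists_nat_gt k
  refine ⟨∑ i ∈ Finset.range (N+2), aco k i, fun n => ?_⟩
  rw [abs_of_nonneg (aco_nonneg k hk n), pow_zero, mul_one]
  induction n using Nat.strong_induction_on with
  | _ n ih =>
    by_cases hn : n < N+2
    · exact Finset.single_le_sum (f := aco k) (fun i _ => aco_nonneg k hk i) (by simpa using hn)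
    · obtain ⟨j, rfl⟩ : ∃ j, n = j+2 := ⟨n-2, by omega⟩
      refine le_trans ?_ (ih j (by omega))
      rw [aco]
      refine mul_le_of_le_one_left (aco_nonneg k hk j) ?_
      rw [div_le_one (by positivity)]
      have : (N:ℝ) ≤ j := by exact_mod_cast (by omega : N ≤ j)
      nlinarith

/-- the Riccati solution -/
theorem riccati (c : ℝ) (hc : 0 < c) : ∃ w : ℝ → ℝ,
    (∀ y, |y| < 1 → HasDerivAt w (c/(1-y^2) - w y^2/2) y) ∧ w 0 = 0 ∧
    (∀ y, w (-y) = - w y) ∧ (∀ y, 0 ≤ y → y < 1 → 0 ≤ w y) := by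
  set k := c/2 with hkd
  have hk : 0 < k := by positivity
  obtain ⟨C, hC⟩ := aco_bdd k hk
  set a := aco k
  have h1 := ps_bound a C 0 hC
  have h2 := ps_bound _ _ _ h1
  set v : ℝ → ℝ := fun y => ∑' n, a n * y^n with hv
  set v1 : ℝ → ℝ := fun y => ∑' n : ℕ, (((n:ℝ)+1) * a (n+1)) * y^n with hv1
  set v2 : ℝ → ℝ := fun y => ∑' n : ℕ, (((n:ℝ)+1) * (((n+1 : ℕ):ℝ)+1) * a (n+1+1)) * y^n with hv2
  have d1 : ∀ y, |y| < 1 → HasDerivAt v (v1 y) y := fun y hy => ps_deriv a C 0 hC y hy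
  have d2 : ∀ y, |y| < 1 → HasDerivAt v1 (v2 y) y := fun y hy => by
    have := ps_deriv _ _ _ h1 y hy
    refine this.congr_deriv ?_
    simp only [hv2, mul_assoc]
  have ode : ∀ y, |y| < 1 → (1-y^2) * v2 y = k * v y := by
    intro y hy
    have s0 := ps_summable' a C 0 hC y hy
    have s2 : Summable (fun n : ℕ => (((n:ℝ)+1) * (((n+1 : ℕ):ℝ)+1) * a (n+1+1)) * y^n) := by
      simpa only [mul_assoc] using ps_summable' _ _ _ h2 y hy
    have s3 : Summable (fun n : ℕ => ((n:ℝ)*((n:ℝ)-1) * a n) * y^n) := by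
      refine (s2.sub (s0.mul_left k)).congr ?_
      intro n
      have : a (n+1+1) = ((n:ℝ)*((n:ℝ)-1)+k) / (((n:ℝ)+2)*((n:ℝ)+1)) * a n := by
        show aco k (n+2) = _
        rw [aco]
      rw [this]
      push_cast
      field_simp
      ring
    have e1 : v2 y = (∑' n : ℕ, ((n:ℝ)*((n:ℝ)-1) * a n) * y^n) + k * v y := by
      rw [hv, ← tsum_mul_left, ← s3.tsum_add (s0.mul_left k)]
      refine tsum_congr fun n => ?_
      have : a (n+1+1) = ((n:ℝ)*((n:ℝ)-1)+k) / (((n:ℝ)+2)*((n:ℝ)+1)) * a n := by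
        show aco k (n+2) = _
        rw [aco]
      rw [this]
      push_cast
      field_simp
      ring
    have e2 : y^2 * v2 y = ∑' n : ℕ, ((n:ℝ)*((n:ℝ)-1) * a n) * y^n := by
      rw [hv2, ← tsum_mul_left, ← s3.sum_add_tsum_nat_add 2]
      simp [Finset.sum_range_succ]
      refine tsum_congr fun n => ?_
      rw [show n+1+1 = n+2 from rfl]
      ring
    linarith
  have vge : ∀ y, 0 ≤ y → y < 1 → 1 ≤ v y := by
    intro y h0 hy
    have := (ps_summable' a C 0 hC y (by rwa [abs_of_nonneg h0])).le_tsum 0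
      (fun n _ => mul_nonneg (aco_nonneg k hk n) (by positivity))
    simpa [a, aco] using this
  have v1ge : ∀ y, 0 ≤ y → y < 1 → 0 ≤ v1 y := by
    intro y h0 hy
    exact tsum_nonneg fun n => mul_nonneg (mul_nonneg (by positivity) (aco_nonneg k hk _)) (by positivity)
  have vev : ∀ y, v (-y) = v y := by
    intro y
    refine tsum_congr fun n => ?_
    rcases Nat.even_or_odd' n with ⟨j, rfl | rfl⟩
    · rw [Even.neg_pow (by simp)]
    · simp [a, aco_odd]
  have v1od : ∀ y, v1 (-y) = - v1 y := by
    intro y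
    rw [hv1, ← tsum_neg]
    refine tsum_congr fun n => ?_
    rcases Nat.even_or_odd' n with ⟨j, rfl | rfl⟩
    · simp [a, aco_odd]
    · rw [Odd.neg_pow (by simp)]
      ring
  have vpos : ∀ y, |y| < 1 → 0 < v y := by
    intro y hy
    rcases le_total 0 y with h | h
    · exact lt_of_lt_of_le one_pos (vge y h (by rwa [abs_of_nonneg h] at hy))
    · rw [← vev]
      exact lt_of_lt_of_le one_pos (vge (-y) (by linarith) (by rwa [abs_of_nonpos h] at hy))
  refine ⟨fun y => 2 * v1 y / v y, ?_, ?_, ?_, ?_⟩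
  · intro y hy
    have hp := vpos y hy
    have := ((d2 y hy).const_mul 2).div (d1 y hy) hp.ne'
    refine HasDerivAt.congr_deriv (f := fun y => 2 * v1 y / v y) this ?_
    have hy2 : 0 < 1 - y^2 := by
      have := (sq_lt_one_iff_abs_lt_one y).2 hy
      linarith
    have e := ode y hy
    have e3 : v2 y = k * v y / (1-y^2) := by
      field_simp
      linarith
    rw [e3]
    field_simp
    rw [hkd]
    ring
  · have := v1od 0
    simp at this
    have : v1 0 = 0 := by linarith
    simp [this]
  · intro y
    simp only [vev, v1od]
    ring
  · intro y h0 hy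
    have := vge y h0 hy
    have := v1ge y h0 hy
    positivity
theorem w_smooth (c : ℝ) (w : ℝ → ℝ)
    (hw : ∀ y, |y| < 1 → HasDerivAt w (c/(1-y^2) - w y^2/2) y) :
    ContDiffOn ℝ (⊤:ℕ∞) w (Set.Ioo (-1) 1) := by
  rw [contDiffOn_infty]
  intro n
  induction n with
  | zero =>
    have : ContinuousOn w (Set.Ioo (-1) 1) := fun y hy =>
      (hw y (abs_lt.2 hy)).continuousAt.continuousWithinAt
    simpa using this
  | succ n ih =>
    push_cast
    rw [contDiffOn_succ_iff_deriv_of_isOpen isOpen_Ioo]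
    refine ⟨fun y hy => (hw y (abs_lt.2 hy)).differentiableAt.differentiableWithinAt, by simp, ?_⟩
    have : ContDiffOn ℝ n (fun y => c/(1-y^2) - w y^2/2) (Set.Ioo (-1) 1) := by
      refine ContDiffOn.sub (ContDiffOn.div contDiffOn_const (by fun_prop) ?_) ((ih.pow 2).div_const 2)
      intro y hy
      have := (sq_lt_one_iff_abs_lt_one y).2 (abs_lt.2 hy)
      linarith
    exact this.congr fun y hy => (hw y (abs_lt.2 hy)).deriv

theorem w_asymp (c : ℝ) (hc : 0 < c) (w : ℝ → ℝ)
    (hw : ∀ y, |y| < 1 → HasDerivAt w (c/(1-y^2) - w y^2/2) y) (w0 : w 0 = 0)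
    (hpos : ∀ y, 0 ≤ y → y < 1 → 0 ≤ w y) (y : ℝ) (hy0 : 0 ≤ y) (hy1 : y < 1) :
    |w y + c * (log (2*(1-y)) / 2)| ≤ c * log 2 + c^2 := by
  have habs : ∀ z ∈ Set.Ico (0:ℝ) 1, |z| < 1 := fun z hz => by
    rw [abs_of_nonneg hz.1]; exact hz.2
  set t : ℝ → ℝ := fun z => (log (1+z) - log (1-z))/2 with ht
  have dt : ∀ z ∈ Set.Ico (0:ℝ) 1, HasDerivAt t (1/(1-z^2)) z := by
    intro z hz
    have h1 : (1+z) ≠ 0 := by linarith [hz.1]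
    have h2 : (1-z) ≠ 0 := by linarith [hz.2]
    have a1 := ((hasDerivAt_id z).const_add 1).log h1
    have a2 := ((hasDerivAt_id z).const_sub 1).log h2
    refine ((a1.sub a2).div_const 2).congr_deriv ?_
    have h3 : 1 - z^2 ≠ 0 := by
      have : 1 - z^2 = (1+z)*(1-z) := by ring
      rw [this]; exact mul_ne_zero h1 h2
    simp only [id]
    field_simp
    ring
  have dh : ∀ z ∈ Set.Ico (0:ℝ) 1, HasDerivAt (fun z => w z - c * t z) (- (w z^2/2)) z := by
    intro z hz
    refine ((hw z (habs z hz)).sub ((dt z hz).const_mul c)).congr_deriv ?_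
    ring
  have t0 : t 0 = 0 := by simp [ht]
  have up : ∀ z ∈ Set.Ico (0:ℝ) 1, w z ≤ c * t z := by
    intro z hz
    have anti : AntitoneOn (fun z => w z - c * t z) (Set.Ico (0:ℝ) 1) := by
      refine antitoneOn_of_deriv_nonpos (convex_Ico 0 1)
        (fun z hz => (dh z hz).continuousAt.continuousWithinAt) ?_ ?_
      · intro z hz
        exact (dh z (interior_subset hz)).differentiableAt.differentiableWithinAt
      · intro z hz
        rw [(dh z (interior_subset hz)).deriv]
        nlinarith [sq_nonneg (w z)]
    have := anti (by simp : (0:ℝ) ∈ Set.Ico (0:ℝ) 1) hz hz.1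
    simp [w0, t0] at this
    linarith
  have tl : ∀ z ∈ Set.Ico (0:ℝ) 1, t z ≤ - log (1-z) := by
    intro z hz
    have h1 : log (1+z) ≤ z := by
      have := log_le_sub_one_of_pos (by linarith [hz.1] : 0 < 1+z)
      linarith
    have h2 : log (1-z) ≤ -z := by
      have := log_le_sub_one_of_pos (by linarith [hz.2] : 0 < 1-z)
      linarith
    simp only [ht]
    linarith
  set F : ℝ → ℝ := fun z => -((1-z) * log (1-z)^2 - 2 * ((1-z) * log (1-z)) + 2*(1-z)) with hF
  have dF : ∀ z ∈ Set.Ico (0:ℝ) 1, HasDerivAt F (log (1-z)^2) z := by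
    intro z hz
    have h2 : (1-z) ≠ 0 := by linarith [hz.2]
    have a0 := (hasDerivAt_id z).const_sub 1
    have a2 := a0.log h2
    have := (((a0.mul (a2.pow 2)).sub ((a0.mul a2).const_mul 2)).add (a0.const_mul 2)).neg
    refine HasDerivAt.congr_deriv (f := F) this ?_
    simp only [id, Pi.pow_apply]
    field_simp
    ring
  have lo : ∀ z ∈ Set.Ico (0:ℝ) 1, - c^2 ≤ w z - c * t z := by
    intro z hz
    have d2 : ∀ z ∈ Set.Ico (0:ℝ) 1,
        HasDerivAt (fun z => (w z - c * t z) + c^2/2 * F z) (- (w z^2/2) + c^2/2 * log (1-z)^2) z :=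
      fun z hz => (dh z hz).add ((dF z hz).const_mul _)
    have mono : MonotoneOn (fun z => (w z - c * t z) + c^2/2 * F z) (Set.Ico (0:ℝ) 1) := by
      refine monotoneOn_of_deriv_nonneg (convex_Ico 0 1)
        (fun z hz => (d2 z hz).continuousAt.continuousWithinAt) ?_ ?_
      · intro z hz
        exact (d2 z (interior_subset hz)).differentiableAt.differentiableWithinAt
      · intro z hz
        have hz := interior_subset hz
        rw [(d2 z hz).deriv]
        have h1 : w z ≤ c * (- log (1-z)) :=
          (up z hz).trans (mul_le_mul_of_nonneg_left (tl z hz) hc.le)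
        have h0 := hpos z hz.1 hz.2
        have := mul_self_le_mul_self h0 h1
        nlinarith
    have h3 := mono (by simp : (0:ℝ) ∈ Set.Ico (0:ℝ) 1) hz hz.1
    have F0 : F 0 = -2 := by simp [hF]
    simp only [w0, t0, F0] at h3
    have Fz : F z ≤ 0 := by
      have hl : log (1-z) ≤ 0 := log_nonpos (by linarith [hz.2]) (by linarith [hz.1])
      have hs : 0 < 1 - z := by linarith [hz.2]
      simp only [hF]
      have : 0 ≤ (1-z) * log (1-z)^2 := by positivity
      nlinarith [mul_nonneg hs.le (neg_nonneg.2 hl)]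
    nlinarith [mul_nonneg (sq_nonneg c) (neg_nonneg.2 Fz)]
  have hy : y ∈ Set.Ico (0:ℝ) 1 := ⟨hy0, hy1⟩
  have u1 := up y hy
  have l1 := lo y hy
  have e1 : log (2*(1-y)) = log 2 + log (1-y) := log_mul (by norm_num) (by linarith)
  have e2 : 0 ≤ log (1+y) := log_nonneg (by linarith)
  have e3 : log (1+y) ≤ log 2 := log_le_log (by linarith) (by linarith)
  have e4 : 0 ≤ log 2 := log_nonneg (by norm_num)
  simp only [ht] at u1 l1
  rw [e1, abs_le]
  constructor
  · nlinarith [mul_nonneg hc.le e2, mul_nonneg hc.le e4]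
  · nlinarith [mul_nonneg hc.le (sub_nonneg.2 e3), sq_nonneg c]

theorem lim1d (c : ℝ) (hc : 0 < c) (w : ℝ → ℝ)
    (hw : ∀ y, |y| < 1 → HasDerivAt w (c/(1-y^2) - w y^2/2) y) (w0 : w 0 = 0)
    (hpos : ∀ y, 0 ≤ y → y < 1 → 0 ≤ w y) :
    Tendsto (fun y => √((c - (1-y^2) * w y^2/2 - 2*y*w y)^2 + w y^2*(1-y^2))
      / (log (2*(1-y)) / 2)) (𝓝[<] 1) (𝓝 (-(2*c))) := by
  set L : ℝ → ℝ := fun y => log (2*(1-y)) / 2 with hL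
  have hs : Tendsto (fun y : ℝ => 2*(1-y)) (𝓝[<] 1) (𝓝[>] 0) := by
    refine tendsto_nhdsWithin_iff.2 ⟨?_, ?_⟩
    · have : Tendsto (fun y : ℝ => 2*(1-y)) (𝓝 1) (𝓝 (2*(1-1))) :=
        (by fun_prop : Continuous (fun y : ℝ => 2*(1-y))).tendsto 1
      simp only [sub_self, mul_zero] at this
      exact this.mono_left nhdsWithin_le_nhds
    · filter_upwards [self_mem_nhdsWithin] with y hy
      simp at hy ⊢
      exact hy
  have L1 : Tendsto L (𝓝[<] 1) atBot :=
    (tendsto_log_nhdsGT_zero.comp hs).atBot_div_const (by norm_num)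
  have Linv : Tendsto (fun y => (L y)⁻¹) (𝓝[<] 1) (𝓝 0) := tendsto_inv_atBot_zero.comp L1
  have near : ∀ᶠ y : ℝ in 𝓝[<] 1, 0 < y ∧ y < 1 ∧ L y < 0 := by
    filter_upwards [self_mem_nhdsWithin, nhdsWithin_le_nhds (Ioi_mem_nhds (by norm_num : (0:ℝ) < 1)),
      L1.eventually (Iio_mem_atBot 0)] with y h1 h2 h3
    exact ⟨h2, h1, h3⟩
  have W : Tendsto (fun y => w y / L y) (𝓝[<] 1) (𝓝 (-c)) := by
    have h0 : Tendsto (fun y => (w y + c * L y) * (L y)⁻¹) (𝓝[<] 1) (𝓝 0) := by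
      refine bdd_le_mul_tendsto_zero' (c * log 2 + c^2) ?_ Linv
      filter_upwards [near] with y hy
      exact w_asymp c hc w hw w0 hpos y hy.1.le hy.2.1
    have h1 := h0.sub_const c
    rw [zero_sub] at h1
    refine h1.congr' ?_
    filter_upwards [near] with y hy
    have := hy.2.2.ne
    field_simp
    ring
  have id1 : Tendsto (fun y : ℝ => y) (𝓝[<] 1) (𝓝 1) := nhdsWithin_le_nhds
  have sL : Tendsto (fun y => (1-y^2) * L y) (𝓝[<] 1) (𝓝 0) := by
    have h0 := tendsto_log_mul_rpow_nhdsGT_zero (r := 1) one_pos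
    have h1 := (h0.comp hs).mul (id1.const_add 1)
    rw [zero_mul] at h1
    have h2 := h1.div_const 4
    rw [zero_div] at h2
    refine h2.congr ?_
    intro y
    simp [hL]
    ring
  have T1 : Tendsto (fun y => c * (L y)⁻¹ - ((1-y^2) * L y) * (w y / L y)^2/2 - 2*y*(w y / L y))
      (𝓝[<] 1) (𝓝 (c * 0 - 0 * (-c)^2/2 - 2*1*(-c))) :=
    ((Linv.const_mul c).sub ((sL.mul (W.pow 2)).div_const 2)).sub ((id1.const_mul 2).mul W)
  have T2 : Tendsto (fun y => (w y / L y)^2 * (1-y^2)) (𝓝[<] 1) (𝓝 ((-c)^2 * (1-1^2))) :=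
    (W.pow 2).mul ((id1.pow 2).const_sub 1)
  have T3 := (((T1.pow 2).add T2).sqrt).neg
  have e : -√((c * 0 - 0 * (-c)^2/2 - 2*1*(-c))^2 + (-c)^2 * (1-1^2)) = -(2*c) := by
    have : (c * 0 - 0 * (-c)^2/2 - 2*1*(-c))^2 + (-c)^2 * (1-1^2) = (2*c)^2 := by ring
    rw [this, sqrt_sq (by positivity)]
  rw [e] at T3
  refine T3.congr' ?_
  filter_upwards [near] with y hy
  have hLn := hy.2.2
  show _ = _ / L y
  have e5 : (c * (L y)⁻¹ - ((1-y^2) * L y) * (w y / L y)^2/2 - 2*y*(w y / L y))^2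
      + (w y / L y)^2 * (1-y^2) =
      ((c - (1-y^2) * w y^2/2 - 2*y*w y)^2 + w y^2*(1-y^2)) / (-L y)^2 := by
    have := hLn.ne
    field_simp
  rw [e5, sqrt_div' _ (sq_nonneg _), sqrt_sq (by linarith)]
  rw [div_neg, neg_neg]
/-- differentiable with prescribed partial derivative -/
def HasPd (j : Fin 3) (f : V3 → ℝ) (d : ℝ) (x : V3) : Prop :=
  DifferentiableAt ℝ f x ∧ pd j f x = d

theorem HasPd.of_diff {j : Fin 3} {f : V3 → ℝ} {x : V3} (h : DifferentiableAt ℝ f x) :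
    HasPd j f (pd j f x) x := ⟨h, rfl⟩

theorem HasPd.mul {j : Fin 3} {f g : V3 → ℝ} {d e : ℝ} {x : V3} (hf : HasPd j f d x)
    (hg : HasPd j g e x) : HasPd j (fun z => f z * g z) (f x * e + g x * d) x := by
  refine ⟨hf.1.mul hg.1, ?_⟩
  unfold pd
  rw [fderiv_fun_mul hf.1 hg.1, ← hf.2, ← hg.2]
  simp [pd]

theorem HasPd.add {j : Fin 3} {f g : V3 → ℝ} {d e : ℝ} {x : V3} (hf : HasPd j f d x)
    (hg : HasPd j g e x) : HasPd j (fun z => f z + g z) (d + e) x := by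
  refine ⟨hf.1.add hg.1, ?_⟩
  unfold pd
  rw [fderiv_fun_add hf.1 hg.1, ← hf.2, ← hg.2]
  simp [pd]

theorem HasPd.sub {j : Fin 3} {f g : V3 → ℝ} {d e : ℝ} {x : V3} (hf : HasPd j f d x)
    (hg : HasPd j g e x) : HasPd j (fun z => f z - g z) (d - e) x := by
  refine ⟨hf.1.sub hg.1, ?_⟩
  unfold pd
  rw [fderiv_fun_sub hf.1 hg.1, ← hf.2, ← hg.2]
  simp [pd]

theorem HasPd.const {j : Fin 3} (c : ℝ) (x : V3) : HasPd j (fun _ => c) 0 x :=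
  ⟨differentiableAt_const c, by simp [pd]⟩

theorem HasPd.coord (j i : Fin 3) (x : V3) :
    HasPd j (fun z => z i) (if i = j then 1 else 0) x := by
  have h : HasFDerivAt (fun z : V3 => z i) (EuclideanSpace.proj i : V3 →L[ℝ] ℝ) x :=
    (EuclideanSpace.proj i : V3 →L[ℝ] ℝ).hasFDerivAt
  refine ⟨h.differentiableAt, ?_⟩
  unfold pd
  rw [h.fderiv]
  simp [e3]

theorem HasPd.comp {j : Fin 3} {f : V3 → ℝ} {d : ℝ} {x : V3} {g : ℝ → ℝ} {g' : ℝ}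
    (hg : HasDerivAt g g' (f x)) (hf : HasPd j f d x) :
    HasPd j (fun z => g (f z)) (g' * d) x := by
  have h := hg.comp_hasFDerivAt x hf.1.hasFDerivAt
  refine ⟨h.differentiableAt, ?_⟩
  unfold pd
  have h2 : fderiv ℝ (fun z => g (f z)) x = g' • fderiv ℝ f x := h.fderiv
  rw [h2, ← hf.2]
  simp [pd]

theorem HasPd.congr {j : Fin 3} {f g : V3 → ℝ} {d : ℝ} {x : V3} (hf : HasPd j f d x)
    (h : g =ᶠ[𝓝 x] f) : HasPd j g d x := by
  refine ⟨hf.1.congr_of_eventuallyEq h, ?_⟩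
  unfold pd
  rw [h.fderiv_eq]
  exact hf.2

theorem pd_congr_on {Ω : Set V3} (ho : IsOpen Ω) {f g : V3 → ℝ} (h : ∀ x ∈ Ω, f x = g x)
    (j : Fin 3) : ∀ x ∈ Ω, pd j f x = pd j g x := by
  intro x hx
  have : f =ᶠ[𝓝 x] g := by
    filter_upwards [ho.mem_nhds hx] with z hz using h z hz
  unfold pd
  rw [this.fderiv_eq]

theorem pd_smooth {Ω : Set V3} (ho : IsOpen Ω) {f : V3 → ℝ} (hf : ContDiffOn ℝ (⊤:ℕ∞) f Ω)
    (j : Fin 3) : ContDiffOn ℝ (⊤:ℕ∞) (pd j f) Ω := by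
  have := hf.fderiv_of_isOpen (m := (⊤:ℕ∞)) ho (by simp)
  exact this.clm_apply contDiffOn_const

theorem diff_of_smooth {Ω : Set V3} (ho : IsOpen Ω) {f : V3 → ℝ} (hf : ContDiffOn ℝ (⊤:ℕ∞) f Ω)
    {x : V3} (hx : x ∈ Ω) : DifferentiableAt ℝ f x :=
  (hf.contDiffAt (ho.mem_nhds hx)).differentiableAt (by simp)

theorem pd_comm_s15 {Ω : Set V3} (ho : IsOpen Ω) {f : V3 → ℝ} (hf : ContDiffOn ℝ (⊤:ℕ∞) f Ω)
    (i j : Fin 3) : ∀ x ∈ Ω, pd i (pd j f) x = pd j (pd i f) x := by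
  intro x hx
  have hs : IsSymmSndFDerivAt ℝ f x :=
    (hf.contDiffAt (ho.mem_nhds hx)).isSymmSndFDerivAt (by
      simp only [minSmoothness_of_isRCLikeNormedField]
      exact WithTop.coe_le_coe.2 (le_top : (2:ℕ∞) ≤ ⊤))
  have hd : DifferentiableAt ℝ (fderiv ℝ f) x := by
    have := hf.fderiv_of_isOpen (m := (⊤:ℕ∞)) ho (by simp)
    exact (this.contDiffAt (ho.mem_nhds hx)).differentiableAt (by simp)
  have key : ∀ i j : Fin 3, pd i (pd j f) x = fderiv ℝ (fderiv ℝ f) x (e3 i) (e3 j) := by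
    intro i j
    unfold pd
    rw [fderiv_clm_apply hd (differentiableAt_const _)]
    simp
  rw [key, key]
  exact hs _ _

/-- the velocity field built from `a` and `b` -/
def uab (a b : V3 → ℝ) (x : V3) : V3 := a x • x - b x • e3 2

theorem uab_apply (a b : V3 → ℝ) (x : V3) (i : Fin 3) :
    uab a b x i = a x * x i - b x * (if i = 2 then 1 else 0) := by
  simp [uab, e3]

theorem ns_of_burgers {Ω : Set V3} (ho : IsOpen Ω) (a b : V3 → ℝ)
    (ha : ContDiffOn ℝ (⊤:ℕ∞) a Ω) (hb : ContDiffOn ℝ (⊤:ℕ∞) b Ω)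
    (hab : ∀ x ∈ Ω, pd 2 b x = a x)
    (hlap : ∀ x ∈ Ω, lap3 b x = - (b x * a x))
    (hea : ∀ x ∈ Ω, ∑ j, x j * pd j a x = -2 * a x)
    (heb : ∀ x ∈ Ω, ∑ j, x j * pd j b x = - b x) :
    ∀ x ∈ Ω, NSEq (uab a b) (fun x => 2 * a x) x := by
  have hlapa : ∀ x ∈ Ω, lap3 a x = -(b x * pd 2 a x + a x * a x) := by
    intro x hx
    have e1 : ∀ j, ∀ x ∈ Ω, pd j (pd j a) x = pd 2 (pd j (pd j b)) x := by
      intro j x hx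
      have h1 : ∀ x ∈ Ω, pd j a x = pd 2 (pd j b) x := by
        intro x hx
        rw [← pd_comm_s15 ho hb j 2 x hx]
        exact pd_congr_on ho (fun z hz => (hab z hz).symm) j x hx
      rw [pd_congr_on ho h1 j x hx]
      exact pd_comm_s15 ho (pd_smooth ho hb j) j 2 x hx
    have hd : ∀ j, HasPd 2 (pd j (pd j b)) (pd 2 (pd j (pd j b)) x) x := fun j =>
      HasPd.of_diff (diff_of_smooth ho (pd_smooth ho (pd_smooth ho hb j) j) hx)
    have h3 := ((hd 0).add (hd 1)).add (hd 2)
    have h4 : lap3 a x = pd 2 (lap3 b) x := by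
      have : lap3 b = fun z => pd 0 (pd 0 b) z + pd 1 (pd 1 b) z + pd 2 (pd 2 b) z := by
        funext z
        simp only [lap3, Fin.sum_univ_three]
      rw [this, h3.2]
      have e2 := fun j => e1 j x hx
      simp only [lap3, Fin.sum_univ_three]
      rw [e2 0, e2 1, e2 2]
    rw [h4, pd_congr_on ho hlap 2 x hx]
    have h5 := (HasPd.const (j := 2) (-1) x).mul ((HasPd.of_diff (diff_of_smooth ho hb hx)).mul
      (HasPd.of_diff (j := 2) (diff_of_smooth ho ha hx)))
    have h6 := h5.2
    simp only [neg_mul, one_mul] at h6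
    rw [h6, hab x hx]
    ring
  have d1 : ∀ i j, ∀ x ∈ Ω, HasPd j (fun z => uab a b z i)
      (a x * (if i = j then 1 else 0) + x i * pd j a x - pd j b x * (if i = 2 then 1 else 0)) x := by
    intro i j x hx
    have h1 := ((HasPd.of_diff (j := j) (diff_of_smooth ho ha hx)).mul (HasPd.coord j i x)).sub
      ((HasPd.of_diff (j := j) (diff_of_smooth ho hb hx)).mul
        (HasPd.const (if i = 2 then (1:ℝ) else 0) x))
    have h2 : (fun z => uab a b z i) = fun z => a z * z i - b z * (if i = 2 then 1 else 0) := by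
      funext z
      exact uab_apply a b z i
    rw [h2]
    refine ⟨h1.1, h1.2.trans ?_⟩
    ring
  have d2 : ∀ i j, ∀ x ∈ Ω, pd j (fun y => pd j (fun z => uab a b z i) y) x =
      pd j a x * (if i = j then 1 else 0) + (x i * pd j (pd j a) x + pd j a x * (if i = j then 1 else 0))
        - pd j (pd j b) x * (if i = 2 then 1 else 0) := by
    intro i j x hx
    rw [pd_congr_on ho (fun z hz => (d1 i j z hz).2) j x hx]
    have da := HasPd.of_diff (j := j) (diff_of_smooth ho ha hx)
    have da2 := HasPd.of_diff (j := j) (diff_of_smooth ho (pd_smooth ho ha j) hx)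
    have db2 := HasPd.of_diff (j := j) (diff_of_smooth ho (pd_smooth ho hb j) hx)
    have := ((da.mul (HasPd.const (if i = j then (1:ℝ) else 0) x)).add
      ((HasPd.coord j i x).mul da2)).sub (db2.mul (HasPd.const (if i = 2 then (1:ℝ) else 0) x))
    rw [this.2]
    ring
  intro x hx
  have l1 := hlap x hx
  have l2 := hlapa x hx
  have l3 := hea x hx
  have l4 := heb x hx
  have l5 := hab x hx
  simp only [lap3, Fin.sum_univ_three] at l1 l2 l3 l4
  refine ⟨fun i => ?_, ?_⟩
  · have hp : pd i (fun x => 2 * a x) x = 2 * pd i a x := by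
      have := (HasPd.const (j := i) 2 x).mul (HasPd.of_diff (diff_of_smooth ho ha hx))
      rw [this.2]; ring
    rw [hp]
    simp only [lap3, Fin.sum_univ_three]
    rw [d2 i 0 x hx, d2 i 1 x hx, d2 i 2 x hx, (d1 i 0 x hx).2, (d1 i 1 x hx).2, (d1 i 2 x hx).2]
    simp only [uab_apply]
    fin_cases i
    · simp
      linear_combination -x 0 * l2 + a x * x 0 * l3 
    · simp
      linear_combination -x 1 * l2 + a x * x 1 * l3 
    · simp
      linear_combination -x 2 * l2 + a x * x 2 * l3 + l1 - a x * l4 + b x * l5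
  · simp only [Fin.sum_univ_three]
    simp only [(d1 _ _ x hx).2]
    simp
    linear_combination l3 - l5
/-- complement of the axis -/
def Om : Set V3 := {x : V3 | 0 < (x 0)^2 + (x 1)^2}

theorem Om_open : IsOpen Om := by
  refine isOpen_lt continuous_const ?_
  fun_prop

theorem norm_sq3 (x : V3) : ‖x‖^2 = x 0^2 + x 1^2 + x 2^2 := by
  rw [EuclideanSpace.norm_sq_eq]
  simp [Fin.sum_univ_three]

theorem cone_sub_s15 : cone3 (sphere2 \ {S3, N3}) ⊆ Om := by
  rintro x ⟨hx0, -, hx⟩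
  by_contra h
  simp only [Om, Set.mem_ofPred_eq, not_lt] at h
  have h0 : x 0 = 0 := by nlinarith [sq_nonneg (x 0), sq_nonneg (x 1)]
  have h1 : x 1 = 0 := by nlinarith [sq_nonneg (x 0), sq_nonneg (x 1)]
  have hn : ‖x‖ = |x 2| := by
    have := norm_sq3 x
    rw [h0, h1] at this
    rw [← Real.sqrt_sq (norm_nonneg x), this]
    simp [Real.sqrt_sq_eq_abs]
  have hnp : 0 < ‖x‖ := norm_pos_iff.2 hx0
  apply hx
  rcases le_total 0 (x 2) with h2 | h2
  · right
    rw [abs_of_nonneg h2] at hn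
    rw [Set.mem_singleton_iff]
    ext i
    fin_cases i
    · simp [N3, h0]
    · simp [N3, h1]
    · simp [N3]
      rw [hn]
      exact inv_mul_cancel₀ (by linarith)
  · left
    rw [abs_of_nonpos h2] at hn
    ext i
    fin_cases i
    · simp [S3, h0]
    · simp [S3, h1]
    · simp [S3]
      rw [hn]
      have : x 2 ≠ 0 := by linarith
      field_simp

/-- cosine of the polar angle -/
def yy (x : V3) : ℝ := x 2 * ‖x‖⁻¹

theorem Om_norm {x : V3} (hx : x ∈ Om) : 0 < ‖x‖ := by
  have h : 0 < x 0^2 + x 1^2 := hx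
  have := norm_sq3 x
  have h3 : 0 < ‖x‖^2 := by rw [this]; positivity
  exact (norm_nonneg x).lt_of_ne' (fun h0 => by rw [h0] at h3; norm_num at h3)

theorem Om_ne {x : V3} (hx : x ∈ Om) : x ≠ 0 := norm_pos_iff.1 (Om_norm hx)

theorem Om_hs {x : V3} (hx : x ∈ Om) : (‖x‖⁻¹)^2 * (x 0^2 + x 1^2 + x 2^2) = 1 := by
  rw [← norm_sq3]
  have := (Om_norm hx).ne'
  field_simp

theorem Om_y {x : V3} (hx : x ∈ Om) : |yy x| < 1 := by
  rw [← sq_lt_one_iff_abs_lt_one]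
  have h : 0 < x 0^2 + x 1^2 := hx
  have h1 := Om_hs hx
  have h2 : 0 < ‖x‖⁻¹ := inv_pos.2 (Om_norm hx)
  have : 0 < (‖x‖⁻¹)^2 * (x 0^2 + x 1^2) := by positivity
  unfold yy
  nlinarith

theorem sinv_smooth : ContDiffOn ℝ (⊤:ℕ∞) (fun x : V3 => ‖x‖⁻¹) Om := by
  intro x hx
  exact ((contDiffAt_norm ℝ (Om_ne hx)).inv (Om_norm hx).ne').contDiffWithinAt

theorem coord_smooth (i : Fin 3) (s : Set V3) : ContDiffOn ℝ (⊤:ℕ∞) (fun x : V3 => x i) s :=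
  (EuclideanSpace.proj i : V3 →L[ℝ] ℝ).contDiff.contDiffOn

theorem yy_smooth : ContDiffOn ℝ (⊤:ℕ∞) yy Om :=
  (coord_smooth 2 Om).mul sinv_smooth

theorem pd_sinv (j : Fin 3) {x : V3} (hx : x ∈ Om) :
    HasPd j (fun z : V3 => ‖z‖⁻¹) (-(x j * (‖x‖⁻¹)^3)) x := by
  have hs := HasPd.of_diff (j := j) (diff_of_smooth Om_open sinv_smooth hx)
  refine ⟨hs.1, ?_⟩
  have q := (((HasPd.coord j 0 x).mul (HasPd.coord j 0 x)).add
    ((HasPd.coord j 1 x).mul (HasPd.coord j 1 x))).add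
    ((HasPd.coord j 2 x).mul (HasPd.coord j 2 x))
  have h1 := (hs.mul hs).mul q
  have h2 : HasPd j (fun z : V3 => ‖z‖⁻¹ * ‖z‖⁻¹ * (z 0 * z 0 + z 1 * z 1 + z 2 * z 2)) 0 x := by
    refine (HasPd.const (j := j) 1 x).congr ?_
    filter_upwards [Om_open.mem_nhds hx] with z hz
    have := Om_hs hz
    linear_combination this
  have h3 := h1.2.symm.trans h2.2
  have h4 := Om_hs hx
  have hp : 0 < ‖x‖⁻¹ := inv_pos.2 (Om_norm hx)
  set s := ‖x‖⁻¹
  set d := pd j (fun z : V3 => ‖z‖⁻¹) x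
  have h5 : s * s * (2 * x j) + (x 0^2 + x 1^2 + x 2^2) * (2 * s * d) = 0 := by
    rw [← h3]
    fin_cases j <;> simp <;> ring
  linear_combination (s/2) * h5 - d * h4

theorem pd_yy (j : Fin 3) {x : V3} (hx : x ∈ Om) :
    HasPd j yy ((if 2 = j then 1 else 0) * ‖x‖⁻¹ - x 2 * (x j * (‖x‖⁻¹)^3)) x := by
  have h := (HasPd.coord j 2 x).mul (pd_sinv j hx)
  refine ⟨h.1, h.2.trans ?_⟩
  ring

/-- the scalar `b` -/
def bb (w : ℝ → ℝ) (x : V3) : ℝ := ‖x‖⁻¹ * w (yy x)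

/-- profile of `a` -/
def AA (c : ℝ) (w : ℝ → ℝ) (y : ℝ) : ℝ := c - (1-y^2) * w y^2/2 - y * w y

/-- the scalar `a` -/
def aa (c : ℝ) (w : ℝ → ℝ) (x : V3) : ℝ := ‖x‖⁻¹ * ‖x‖⁻¹ * AA c w (yy x)

theorem bb_smooth (w : ℝ → ℝ) (h : ContDiffOn ℝ (⊤:ℕ∞) w (Set.Ioo (-1) 1)) :
    ContDiffOn ℝ (⊤:ℕ∞) (bb w) Om :=
  sinv_smooth.mul (h.comp yy_smooth fun _ hx => abs_lt.1 (Om_y hx))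

theorem aa_smooth (c : ℝ) (w : ℝ → ℝ) (h : ContDiffOn ℝ (⊤:ℕ∞) w (Set.Ioo (-1) 1)) :
    ContDiffOn ℝ (⊤:ℕ∞) (aa c w) Om := by
  refine (sinv_smooth.mul sinv_smooth).mul
    (ContDiffOn.comp (g := AA c w) (t := Set.Ioo (-1) 1) ?_ yy_smooth fun _ hx => abs_lt.1 (Om_y hx))
  unfold AA
  have h1 : ContDiffOn ℝ (⊤:ℕ∞) (fun y : ℝ => 1 - y^2) (Set.Ioo (-1) 1) := by fun_prop
  have h2 : ContDiffOn ℝ (⊤:ℕ∞) (fun y : ℝ => y) (Set.Ioo (-1) 1) := by fun_prop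
  exact (contDiffOn_const.sub ((h1.mul (h.pow 2)).div_const 2)).sub (h2.mul h)

theorem aa_diff (c : ℝ) (w : ℝ → ℝ) (w1 : ℝ → ℝ)
    (hw : ∀ y, |y| < 1 → HasDerivAt w (w1 y) y) (y : ℝ) (hy : |y| < 1) :
    DifferentiableAt ℝ (AA c w) y := by
  have := (hw y hy).differentiableAt
  unfold AA
  fun_prop

theorem pd_bb (w w1 : ℝ → ℝ) (hw : ∀ y, |y| < 1 → HasDerivAt w (w1 y) y) (j : Fin 3)
    {x : V3} (hx : x ∈ Om) :
    HasPd j (bb w) (‖x‖⁻¹ * (w1 (yy x) *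
      ((if 2 = j then 1 else 0) * ‖x‖⁻¹ - x 2 * (x j * (‖x‖⁻¹)^3)))
        + w (yy x) * (-(x j * (‖x‖⁻¹)^3))) x :=
  (pd_sinv j hx).mul (HasPd.comp (hw _ (Om_y hx)) (pd_yy j hx))

theorem ns_main (c : ℝ) (w : ℝ → ℝ)
    (hw : ∀ y, |y| < 1 → HasDerivAt w (c/(1-y^2) - w y^2/2) y) :
    ∀ x ∈ Om, NSEq (uab (aa c w) (bb w)) (fun x => 2 * aa c w x) x := by
  set w1 : ℝ → ℝ := fun y => c/(1-y^2) - w y^2/2 with hw1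
  have hsm := w_smooth c w hw
  have hpos : ∀ y : ℝ, |y| < 1 → 1 - y^2 ≠ 0 := fun y hy => by
    have := (sq_lt_one_iff_abs_lt_one y).2 hy
    linarith
  have r1 : ∀ y : ℝ, |y| < 1 → (1-y^2) * w1 y = c - (1-y^2) * w y^2/2 := fun y hy => by
    have := hpos y hy
    simp only [hw1]
    field_simp
  set w2 : ℝ → ℝ := fun y => 2*y*c/(1-y^2)^2 - w y * w1 y with hw2
  have dw1 : ∀ y : ℝ, |y| < 1 → HasDerivAt w1 (w2 y) y := fun y hy => by
    have h0 := hpos y hy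
    have h1 := (((hasDerivAt_id y).pow 2).const_sub 1)
    have h2 := (((hasDerivAt_const y c).div h1 h0)).sub (((hw y hy).pow 2).div_const 2)
    refine HasDerivAt.congr_deriv (f := w1) h2 ?_
    simp only [hw2, hw1, id, Pi.pow_apply]
    field_simp
    ring
  have r2 : ∀ y : ℝ, |y| < 1 → (1-y^2) * w2 y - 2*y*w1 y = y * w y^2 - (1-y^2) * w y * w1 y :=
    fun y hy => by
    have h0 := hpos y hy
    simp only [hw2]
    have : (1-y^2) * (2*y*c/(1-y^2)^2) = 2 * y * (c / (1-y^2)) := by field_simp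
    have h3 : c/(1-y^2) = w1 y + w y^2/2 := by simp only [hw1]; ring
    rw [h3] at this
    linear_combination this
  refine ns_of_burgers Om_open _ _ (aa_smooth c w hsm) (bb_smooth w hsm) ?_ ?_ ?_ ?_
  · intro x hx
    rw [(pd_bb w w1 hw 2 hx).2]
    have := r1 _ (Om_y hx)
    have hy : yy x = x 2 * ‖x‖⁻¹ := rfl
    unfold aa AA
    simp only [if_true]
    linear_combination (‖x‖⁻¹)^2 * this + (‖x‖⁻¹)^2 * (w1 (yy x) * (yy x + x 2 * ‖x‖⁻¹) + w (yy x)) * hy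
  · intro x hx
    have hs := fun j => pd_sinv j hx
    have hs3 : ∀ j, HasPd j (fun z : V3 => (‖z‖⁻¹)^3) (3 * (‖x‖⁻¹)^2 * (-(x j * (‖x‖⁻¹)^3))) x := by
      intro j
      have := HasPd.comp (g := fun t => t^3) (hasDerivAt_pow 3 _) (hs j)
      exact this
    have hxs := fun j => (HasPd.coord j j x).mul (hs3 j)
    have hW := fun j => HasPd.comp (g' := w1 (yy x)) (hw _ (Om_y hx)) (pd_yy j hx)
    have hW1 := fun j => HasPd.comp (dw1 _ (Om_y hx)) (pd_yy j hx)
    have hneg : ∀ j, HasPd j (fun z : V3 => -(z j * (‖z‖⁻¹)^3))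
        (-(x j * (3 * (‖x‖⁻¹)^2 * (-(x j * (‖x‖⁻¹)^3))) + (‖x‖⁻¹)^3 * (if j = j then 1 else 0))) x := by
      intro j
      have := (HasPd.const (j := j) 0 x).sub (hxs j)
      simpa only [zero_sub] using this
    have hd := fun j : Fin 3 =>
      (pd_congr_on Om_open (fun z hz => (pd_bb w w1 hw j hz).2) j x hx).trans
      (((hs j).mul ((hW1 j).mul (((HasPd.const (j := j) (if 2 = j then (1:ℝ) else 0) x).mul (hs j)).sub
        ((HasPd.coord j 2 x).mul (hxs j))))).add ((hW j).mul (hneg j))).2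
    unfold lap3
    rw [Fin.sum_univ_three]
    erw [hd 0, hd 1, hd 2]
    have e1 := r1 _ (Om_y hx)
    have e2 := r2 _ (Om_y hx)
    have e3 := Om_hs hx
    unfold aa AA bb
    have hy : yy x = x 2 * ‖x‖⁻¹ := rfl
    generalize w2 (yy x) = W2 at *
    generalize w1 (yy x) = W1 at *
    generalize w (yy x) = W at *
    rw [hy] at e1 e2 ⊢
    generalize ‖x‖⁻¹ = s at *
    simp
    linear_combination (3*s^3*W + 5*W1*x 2*s^4 + W2*(x 2)^2*s^5) * e3 + s^3 * e2 - s^3 * W * e1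
  · intro x hx
    have hA := (aa_diff c w w1 hw _ (Om_y hx)).hasDerivAt
    have hd : ∀ j, pd j (aa c w) x = _ := fun j =>
      (((pd_sinv j hx).mul (pd_sinv j hx)).mul (HasPd.comp hA (pd_yy j hx))).2
    rw [Fin.sum_univ_three, hd 0, hd 1, hd 2]
    have e3 := Om_hs hx
    unfold aa
    generalize deriv (AA c w) (yy x) = A1 at *
    generalize AA c w (yy x) = A at *
    generalize ‖x‖⁻¹ = s at *
    simp
    linear_combination (-2*s^2*A - A1*x 2*s^3) * e3
  · intro x hx
    have hd := fun j => (pd_bb w w1 hw j hx).2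
    rw [Fin.sum_univ_three, hd 0, hd 1, hd 2]
    have e3 := Om_hs hx
    unfold bb
    generalize w1 (yy x) = W1 at *
    generalize w (yy x) = W at *
    generalize ‖x‖⁻¹ = s at *
    simp
    linear_combination (-s*W - W1*x 2*s^2) * e3

theorem yy_smul (x : V3) (lam : ℝ) (h : 0 < lam) : yy (lam • x) = yy x := by
  unfold yy
  rw [norm_smul, Real.norm_of_nonneg h.le]
  simp only [PiLp.smul_apply, smul_eq_mul]
  rw [mul_inv]
  field_simp

theorem norm_uab_sphere (c : ℝ) (w : ℝ → ℝ) (x : V3) (hx : ‖x‖ = 1) :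
    ‖uab (aa c w) (bb w) x‖ =
      √((c - (1-(x 2)^2) * w (x 2)^2/2 - 2*x 2*w (x 2))^2 + w (x 2)^2*(1-(x 2)^2)) := by
  rw [← Real.sqrt_sq (norm_nonneg (uab _ _ x)), norm_sq3]
  have h := norm_sq3 x
  rw [hx] at h
  simp only [uab_apply, aa, bb, AA, yy, hx]
  congr 1
  simp
  linear_combination -(c - (1-(x 2)^2) * w (x 2)^2/2 - x 2 * w (x 2))^2 * h

theorem dist_N (x : V3) (hx : ‖x‖ = 1) : dist x N3 = √(2 * (1 - x 2)) := by
  have h := norm_sq3 x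
  rw [hx] at h
  rw [dist_eq_norm, ← Real.sqrt_sq (norm_nonneg (x - N3)), norm_sq3]
  congr 1
  simp [N3]
  linear_combination -h

theorem dist_S (x : V3) (hx : ‖x‖ = 1) : dist x S3 = √(2 * (1 - (-x 2))) := by
  have h := norm_sq3 x
  rw [hx] at h
  rw [dist_eq_norm, ← Real.sqrt_sq (norm_nonneg (x - S3)), norm_sq3]
  congr 1
  simp [S3]
  linear_combination -h

theorem lt_N (x : V3) (hx : ‖x‖ = 1) (h : x ≠ N3) : x 2 < 1 := by
  have h1 := dist_N x hx
  have h2 := dist_pos.2 h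
  rw [h1, Real.sqrt_pos] at h2
  linarith

theorem lt_S (x : V3) (hx : ‖x‖ = 1) (h : x ≠ S3) : - x 2 < 1 := by
  have h1 := dist_S x hx
  have h2 := dist_pos.2 h
  rw [h1, Real.sqrt_pos] at h2
  linarith

theorem axisym_uab (a b : V3 → ℝ) (Ω : Set V3)
    (ha : ∀ x y : V3, ‖x‖ = ‖y‖ → x 2 = y 2 → a x = a y)
    (hb : ∀ x y : V3, ‖x‖ = ‖y‖ → x 2 = y 2 → b x = b y) :
    AxisymOn (uab a b) Ω ∧ ∀ x, uPc (uab a b) x = 0 := by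
  have hP : ∀ x, uPc (uab a b) x = 0 := by
    intro x
    simp only [uPc, uab_apply]
    simp
    left
    ring
  refine ⟨?_, hP⟩
  intro x _ y _ hn h2
  have hq : x 0^2 + x 1^2 = y 0^2 + y 1^2 := by
    have h3 := norm_sq3 x
    have h4 := norm_sq3 y
    rw [hn] at h3
    rw [h2] at h3
    linarith
  have hr : rho x = rho y := by
    unfold rho
    rw [hq]
  refine ⟨?_, ?_, by rw [hP, hP]⟩
  · simp only [uRc, uab_apply]
    rw [hn, ha x y hn h2, hb x y hn h2, h2]
    congr 1
    simp
    linear_combination a y * hq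
  · simp only [uTc, uab_apply]
    rw [hn, ha x y hn h2, hb x y hn h2, h2, hr]
    congr 2
    simp
    linear_combination a y * y 2 * hq

/-- optimality of the removable singularity theorem: solutions with exact
logarithmic rate `-α` at both poles. -/
theorem existence_log_rate_solutions (α : ℝ) (hα : 0 < α) :
    ∃ (u : V3 → V3) (p : V3 → ℝ),
      ContDiffOn ℝ (⊤:ℕ∞) u (cone3 (sphere2 \ {S3, N3})) ∧
      ContDiffOn ℝ (⊤:ℕ∞) p (cone3 (sphere2 \ {S3, N3})) ∧
      (∀ x ∈ cone3 (sphere2 \ {S3, N3}), ∀ lam : ℝ, 0 < lam →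
        u (lam • x) = lam⁻¹ • u x) ∧
      (∀ x ∈ cone3 (sphere2 \ {S3, N3}), ∀ lam : ℝ, 0 < lam →
        p (lam • x) = (lam ^ 2)⁻¹ * p x) ∧
      AxisymOn u (cone3 (sphere2 \ {S3, N3})) ∧
      (∀ x ∈ cone3 (sphere2 \ {S3, N3}), uPc u x = 0) ∧
      (∀ x ∈ cone3 (sphere2 \ {S3, N3}), NSEq u p x) ∧
      Tendsto (fun x => ‖u x‖ / Real.log (dist x S3))
        (𝓝[sphere2 \ {S3, N3}] S3) (𝓝 (-α)) ∧
      Tendsto (fun x => ‖u x‖ / Real.log (dist x N3))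
        (𝓝[sphere2 \ {S3, N3}] N3) (𝓝 (-α)) := by
  obtain ⟨w, hw, w0, hodd, hpos⟩ := riccati (α/2) (by positivity)
  set c := α/2 with hc
  have hcp : 0 < c := by positivity
  have hsm := w_smooth c w hw
  have sa := (aa_smooth c w hsm).mono cone_sub_s15
  have sb := (bb_smooth w hsm).mono cone_sub_s15
  have lim := lim1d c hcp w hw w0 hpos
  have hα2 : -(2*c) = -α := by rw [hc]; ring
  rw [hα2] at lim
  have hyy : ∀ x y : V3, ‖x‖ = ‖y‖ → x 2 = y 2 → yy x = yy y := by
    intro x y h1 h2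
    simp only [yy, h1, h2]
  have hax := axisym_uab (aa c w) (bb w) (cone3 (sphere2 \ {S3, N3}))
    (fun x y h1 h2 => by simp only [aa, hyy x y h1 h2, h1])
    (fun x y h1 h2 => by simp only [bb, hyy x y h1 h2, h1])
  refine ⟨uab (aa c w) (bb w), fun x => 2 * aa c w x, ?_, ?_, ?_, ?_, hax.1,
    fun x _ => hax.2 x, fun x hx => ns_main c w hw x (cone_sub_s15 hx), ?_, ?_⟩
  · unfold uab
    exact (sa.smul contDiffOn_id).sub (sb.smul contDiffOn_const)
  · exact contDiffOn_const.mul sa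
  · intro x hx lam hl
    ext i
    simp only [uab_apply, aa, bb, yy_smul x lam hl, norm_smul, Real.norm_of_nonneg hl.le,
      PiLp.smul_apply, smul_eq_mul, mul_inv]
    field_simp
  · intro x hx lam hl
    simp only [aa, yy_smul x lam hl, norm_smul, Real.norm_of_nonneg hl.le, mul_inv]
    field_simp
  · have ht : Tendsto (fun x : V3 => -x 2) (𝓝[sphere2 \ {S3, N3}] S3) (𝓝[<] 1) := by
      refine tendsto_nhdsWithin_iff.2 ⟨?_, ?_⟩
      · have : Tendsto (fun x : V3 => -x 2) (𝓝 S3) (𝓝 (-S3 2)) :=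
          (by fun_prop : Continuous (fun x : V3 => -x 2)).tendsto S3
        have e : -S3 2 = 1 := by simp [S3]
        rw [e] at this
        exact this.mono_left nhdsWithin_le_nhds
      · filter_upwards [self_mem_nhdsWithin] with x hx
        have hn : ‖x‖ = 1 := by simpa [sphere2] using hx.1
        exact lt_S x hn (fun h => hx.2 (by simp [h]))
    refine (lim.comp ht).congr' ?_
    filter_upwards [self_mem_nhdsWithin] with x hx
    have hn : ‖x‖ = 1 := by simpa [sphere2] using hx.1
    have h1 := lt_S x hn (fun h => hx.2 (by simp [h]))
    rw [norm_uab_sphere c w x hn, dist_S x hn, Real.log_sqrt (by linarith)]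
    simp only [Function.comp, hodd]
    congr 2
    ring
  · have ht : Tendsto (fun x : V3 => x 2) (𝓝[sphere2 \ {S3, N3}] N3) (𝓝[<] 1) := by
      refine tendsto_nhdsWithin_iff.2 ⟨?_, ?_⟩
      · have : Tendsto (fun x : V3 => x 2) (𝓝 N3) (𝓝 (N3 2)) :=
          (by fun_prop : Continuous (fun x : V3 => x 2)).tendsto N3
        have e : N3 2 = 1 := by simp [N3]
        rw [e] at this
        exact this.mono_left nhdsWithin_le_nhds
      · filter_upwards [self_mem_nhdsWithin] with x hx
        have hn : ‖x‖ = 1 := by simpa [sphere2] using hx.1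
        exact lt_N x hn (fun h => hx.2 (by simp [h]))
    refine (lim.comp ht).congr' ?_
    filter_upwards [self_mem_nhdsWithin] with x hx
    have hn : ‖x‖ = 1 := by simpa [sphere2] using hx.1
    have h1 := lt_N x hn (fun h => hx.2 (by simp [h]))
    rw [norm_uab_sphere c w x hn, dist_N x hn, Real.log_sqrt (by linarith)]
    simp only [Function.comp]
end
end
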